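/- Let ρ : S² → S² be a continuous map of degree k ≥ 2. If there exist two distinct points p₁ ≠ p₂ in S² such that each fiber ρ⁻¹(pᵢ) consists of a single point, then for every q ∈ S² \ {p₁, p₂} the fiber ρ⁻¹(q) has at least k elements. In particular, the set of points with a singleton fiber has at most two elements. -/

import Mathlib

open scoped Topology Topology.Homotopy unitInterval

noncomputable section

/-- The 2-sphere `S²`, as the unit sphere in Euclidean 3-space. -/
abbrev Sphere2 : Type := Metric.sphere (0 : EuclideanSpace ℝ (Fin 3)) 1

/-- The map induced by a continuous map `ρ` on second homotopy groups,
`π₂(X, b) → π₂(Y, ρ b)`, given by postcomposition. -/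
noncomputable def piTwoMap {X Y : Type*} [TopologicalSpace X] [TopologicalSpace Y]
    (ρ : C(X, Y)) (b : X) :
    HomotopyGroup (Fin 2) X b → HomotopyGroup (Fin 2) Y (ρ b) :=
  Quotient.map
    (fun p => ⟨ρ.comp p.1, fun y hy => by
      simp only [ContinuousMap.comp_apply]
      rw [p.2 y hy]⟩)
    (fun p q h => by
      obtain ⟨H⟩ := h
      exact ⟨H.compContinuousMap ρ⟩)

/-- A continuous self-map `ρ` of `S²` has degree `k` if the induced map on
`π₂(S²) ≅ H₂(S²; ℤ) ≅ ℤ` is multiplication by `k` (written multiplicatively,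
`γ ↦ γ ^ k`). -/
def HasDegree (ρ : C(Sphere2, Sphere2)) (k : ℤ) : Prop :=
  ∃ (b : Sphere2) (e : HomotopyGroup (Fin 2) Sphere2 b ≃* Multiplicative ℤ)
    (e' : HomotopyGroup (Fin 2) Sphere2 (ρ b) ≃* Multiplicative ℤ),
    ∀ γ : HomotopyGroup (Fin 2) Sphere2 b, e' (piTwoMap ρ b γ) = (e γ) ^ k

/-!
Identify the sphere with the Riemann sphere `OnePoint ℂ` so that the two singleton fibers lie over
`0` and `∞` and `f 1 = 1`. On the punctured plane `f` lifts through the exponential and takes the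
form `f z = ‖z‖ * (z / ‖z‖) ^ d * exp (G z)`. Damping `G` to zero is a homotopy from `f` to the
angular power map `z ↦ ‖z‖ * (z / ‖z‖) ^ d`, which raises the class `c` of polar coordinates in
`π₂` to its `d`-th power. As `π₂` is nontrivial and every class has the form `g_* c`, the class
`c` is not trivial, so `|d|` is the absolute value of the degree.

For `d ≠ 0` the twist `exp G` can be absorbed into the source: `f` is the angular power map after
a map `g` homotopic to the identity. Such a `g` is surjective, because a map missing a point
is trivial on `π₂`. Each point other than `0` and `∞` has `|d|` angular roots, and each of these
has a preimage under `g`.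
-/

/-! ### Functoriality of homotopy groups -/

section HomotopyGroupMap

variable {N X Y Z : Type*} [TopologicalSpace X] [TopologicalSpace Y] [TopologicalSpace Z]
  {x : X} {y : Y} {z : Z}

/-- The class of a generalized loop in the homotopy group, as an element of the type
`HomotopyGroup N X x` rather than of the underlying quotient. -/
def homotopyClass (p : GenLoop N X x) : HomotopyGroup N X x :=
  ⟦p⟧

theorem homotopyClass_surjective :
    Function.Surjective (homotopyClass : GenLoop N X x → HomotopyGroup N X x) :=
  Quotient.exists_rep

theorem homotopyClass_eq_of_homotopy {p q : GenLoop N X x} (K : C(I × (N → I), X))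
    (h_zero : ∀ c, K (0, c) = p c) (h_one : ∀ c, K (1, c) = q c)
    (h_boundary : ∀ u, ∀ c ∈ Cube.boundary N, K (u, c) = x) :
    homotopyClass p = homotopyClass q :=
  Quotient.sound ⟨⟨⟨K, h_zero, h_one⟩, fun u c hc => (h_boundary u c hc).trans (p.2 c hc).symm⟩⟩

/-- Postcomposition of a generalized loop with a continuous map; the base point of the target is
a free variable, so that no transport is needed when composing. -/
def genLoopMap (f : C(X, Y)) (h : f x = y) (p : GenLoop N X x) : GenLoop N Y y :=
  ⟨f.comp p.1, fun c hc => (congrArg f (p.2 c hc)).trans h⟩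

@[simp]
theorem genLoopMap_apply (f : C(X, Y)) (h : f x = y) (p : GenLoop N X x) (c : N → I) :
    genLoopMap f h p c = f (p c) :=
  rfl

variable [DecidableEq N]

theorem genLoopMap_transAt (f : C(X, Y)) (h : f x = y) (i : N) (p q : GenLoop N X x) :
    genLoopMap f h (GenLoop.transAt i p q) =
      GenLoop.transAt i (genLoopMap f h p) (genLoopMap f h q) := by
  ext c
  simp only [genLoopMap_apply, GenLoop.transAt, GenLoop.coe_copy, apply_ite f]

variable [Nonempty N]

theorem homotopyClass_mul (i : N) (p q : GenLoop N X x) :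
    homotopyClass p * homotopyClass q = homotopyClass (GenLoop.transAt i q p) :=
  HomotopyGroup.mul_spec

/-- The homomorphism of homotopy groups induced by a continuous map. -/
def homotopyGroupMap (f : C(X, Y)) (h : f x = y) : HomotopyGroup N X x →* HomotopyGroup N Y y :=
  MonoidHom.mk' (Quotient.map (genLoopMap f h) fun _ _ ⟨H⟩ => ⟨H.compContinuousMap f⟩) <| by
    intro a b
    obtain ⟨p, rfl⟩ := homotopyClass_surjective a
    obtain ⟨q, rfl⟩ := homotopyClass_surjective b
    have i : N := Classical.arbitrary N
    rw [homotopyClass_mul i]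
    exact (congrArg homotopyClass (genLoopMap_transAt f h i q p)).trans
      (homotopyClass_mul i _ _).symm

theorem homotopyGroupMap_comp (g : C(Y, Z)) (f : C(X, Y)) (hg : g y = z) (hf : f x = y)
    (hgf : g.comp f x = z) (γ : HomotopyGroup N X x) :
    homotopyGroupMap (g.comp f) hgf γ = homotopyGroupMap g hg (homotopyGroupMap f hf γ) := by
  obtain ⟨p, rfl⟩ := homotopyClass_surjective γ
  rfl

theorem homotopyGroupMap_id (γ : HomotopyGroup N X x) :
    homotopyGroupMap (ContinuousMap.id X) rfl γ = γ := by
  obtain ⟨p, rfl⟩ := homotopyClass_surjective γ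
  rfl

theorem homotopyGroupMap_eq_of_homotopyRel {f g : C(X, Y)} {S : Set X}
    (F : f.HomotopyRel g S) (hx : x ∈ S) (hf : f x = y) (hg : g x = y) (γ : HomotopyGroup N X x) :
    homotopyGroupMap f hf γ = homotopyGroupMap g hg γ := by
  obtain ⟨p, rfl⟩ := homotopyClass_surjective γ
  refine homotopyClass_eq_of_homotopy
    (F.toContinuousMap.comp ((ContinuousMap.id I).prodMap p.1)) ?_ ?_ ?_
  · exact fun c => F.apply_zero (p c)
  · exact fun c => F.apply_one (p c)
  · intro u c hc
    have hpc : p c = x := p.2 c hc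
    change F (u, p c) = y
    rw [hpc, F.eq_fst u hx, hf]

/-- The isomorphism of homotopy groups induced by a homeomorphism. -/
def homotopyGroupCongr (e : X ≃ₜ Y) (h : e x = y) : HomotopyGroup N X x ≃* HomotopyGroup N Y y :=
  have h' : e.symm y = x := e.symm_apply_eq.2 h.symm
  { homotopyGroupMap (e : C(X, Y)) h with
    invFun := homotopyGroupMap (e.symm : C(Y, X)) h'
    left_inv := fun γ => by
      have comp_eq : (e.symm : C(Y, X)).comp (e : C(X, Y)) = ContinuousMap.id X := by ext; simp
      refine (homotopyGroupMap_comp _ _ h' h (by simp) γ).symm.trans ?_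
      simp only [comp_eq]
      exact homotopyGroupMap_id γ
    right_inv := fun γ => by
      have comp_eq : (e : C(X, Y)).comp (e.symm : C(Y, X)) = ContinuousMap.id Y := by ext; simp
      refine (homotopyGroupMap_comp _ _ h h' (by simp) γ).symm.trans ?_
      simp only [comp_eq]
      exact homotopyGroupMap_id γ }

@[simp]
theorem homotopyGroupCongr_apply (e : X ≃ₜ Y) (h : e x = y) (γ : HomotopyGroup N X x) :
    homotopyGroupCongr e h γ = homotopyGroupMap (e : C(X, Y)) h γ :=
  rfl

theorem homotopyGroup_eq_one_of_module {E : Type*} [AddCommGroup E] [Module ℝ E]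
    [TopologicalSpace E] [IsTopologicalAddGroup E] [ContinuousSMul ℝ E] {v : E}
    (γ : HomotopyGroup N E v) : γ = 1 := by
  obtain ⟨p, rfl⟩ := homotopyClass_surjective γ
  have hp : Continuous p := p.1.continuous
  refine homotopyClass_eq_of_homotopy (q := GenLoop.const)
    ⟨fun w => (1 - (w.1 : ℝ)) • p w.2 + (w.1 : ℝ) • v, by fun_prop⟩ ?_ ?_ ?_
  · simp
  · simp
  · intro u c hc
    have hpc : p c = v := p.2 c hc
    simp [hpc, ← add_smul]

end HomotopyGroupMap

/-! ### Polar coordinates and winding loops -/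

/-- Polar coordinates on a sphere-like space: `Q t s` has longitude `t`, with period `1`, and
latitude `s`; at the latitudes `0` and `1` (the poles) the longitude is irrelevant. The curve
`s ↦ Q 0 s` is called the meridian. -/
structure PolarCoordinates (X : Type*) [TopologicalSpace X] where
  toFun : ℝ → I → X
  continuous_toFun : Continuous fun v : ℝ × I => toFun v.1 v.2
  periodic (s : I) : Function.Periodic (toFun · s) 1
  apply_zero (t : ℝ) : toFun t 0 = toFun 0 0
  apply_one (t : ℝ) : toFun t 1 = toFun 0 1

namespace PolarCoordinates

variable {X Y : Type*} [TopologicalSpace X] [TopologicalSpace Y]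

instance : CoeFun (PolarCoordinates X) fun _ => ℝ → I → X :=
  ⟨toFun⟩

variable (Q : PolarCoordinates X) {x₀ : X} {y₀ : Y}

theorem continuous_comp {T : Type*} [TopologicalSpace T] {φ : T → ℝ} {θ : T → I}
    (hφ : Continuous φ) (hθ : Continuous θ) : Continuous fun u => Q (φ u) (θ u) :=
  Q.continuous_toFun.comp (hφ.prodMk hθ)

theorem add_int (t : ℝ) (n : ℤ) (s : I) : Q (t + n) s = Q t s := by
  simpa using (Q.periodic s).int_mul n t

theorem apply_int (n : ℤ) (s : I) : Q n s = Q 0 s := by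
  simpa using Q.add_int 0 n s

theorem exists_meridian_of_mem_boundary {φ : I → ℝ} {m n : ℤ} (h_zero : φ 0 = m)
    (h_one : φ 1 = n) {c : Fin 2 → I} (hc : c ∈ Cube.boundary (Fin 2)) :
    ∃ s, Q (φ (c 0)) (c 1) = Q 0 s := by
  obtain ⟨i, hi⟩ := hc
  fin_cases i
  · refine ⟨c 1, ?_⟩
    rcases hi with hi | hi
    · rw [show c 0 = 0 from hi, h_zero, Q.apply_int]
    · rw [show c 0 = 1 from hi, h_one, Q.apply_int]
  · rcases hi with hi | hi
    · exact ⟨0, by rw [show c 1 = 0 from hi, Q.apply_zero]⟩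
    · exact ⟨1, by rw [show c 1 = 1 from hi, Q.apply_one]⟩

section WindingLoop

variable (g : C(X, Y)) (hg : ∀ s, g (Q 0 s) = y₀)

/-- For a map `g` collapsing the meridian to a point, the image under `g` of the square wrapped
`d` times around the polar axis. -/
def windingLoop (d : ℤ) : GenLoop (Fin 2) Y y₀ :=
  ⟨⟨fun c => g (Q (d * (c 0 : ℝ)) (c 1)),
    g.continuous.comp (Q.continuous_comp (by fun_prop) (by fun_prop))⟩, fun c hc => by
    obtain ⟨s, hs⟩ := Q.exists_meridian_of_mem_boundary (φ := fun t => d * (t : ℝ)) (m := 0)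
      (n := d) (by simp) (by simp) hc
    exact (congrArg g hs).trans (hg s)⟩

theorem windingLoop_apply (d : ℤ) (c : Fin 2 → I) :
    Q.windingLoop g hg d c = g (Q (d * (c 0 : ℝ)) (c 1)) :=
  rfl

-- Longitudes with the same end points are homotopic by linear interpolation.
theorem homotopyClass_eq_windingLoop {p : GenLoop (Fin 2) Y y₀} {φ : I → ℝ} (hφ : Continuous φ)
    {n : ℤ} (h_zero : φ 0 = 0) (h_one : φ 1 = n) (hp : ∀ c, p c = g (Q (φ (c 0)) (c 1))) :
    homotopyClass p = homotopyClass (Q.windingLoop g hg n) := by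
  refine homotopyClass_eq_of_homotopy
    ⟨fun v => g (Q ((1 - (v.1 : ℝ)) * φ (v.2 0) + v.1 * (n * (v.2 0 : ℝ))) (v.2 1)),
      g.continuous.comp (Q.continuous_comp (by fun_prop) (by fun_prop))⟩ ?_ ?_ ?_
  · simp [hp]
  · simp [windingLoop_apply]
  · intro u c hc
    obtain ⟨s, hs⟩ := Q.exists_meridian_of_mem_boundary
      (φ := fun t => (1 - (u : ℝ)) * φ t + u * (n * (t : ℝ))) (m := 0) (n := n)
      (by simp [h_zero]) (by simp only [h_one, Set.Icc.coe_one]; ring) hc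
    exact (congrArg g hs).trans (hg s)

theorem homotopyClass_windingLoop_zero : homotopyClass (Q.windingLoop g hg 0) = 1 := by
  refine congrArg homotopyClass (a₂ := GenLoop.const) ?_
  ext c
  simp [windingLoop_apply, hg]

theorem homotopyClass_windingLoop_add_one (d : ℤ) :
    homotopyClass (Q.windingLoop g hg (d + 1)) =
      homotopyClass (Q.windingLoop g hg 1) * homotopyClass (Q.windingLoop g hg d) := by
  let φ : I → ℝ := fun t => if (t : ℝ) ≤ 1 / 2 then d * (2 * (t : ℝ)) else 2 * t - 1 + d
  have hφ : Continuous φ :=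
    Continuous.if_le (by fun_prop) (by fun_prop) (by fun_prop) (by fun_prop)
      fun t ht => by rw [ht]; ring
  rw [homotopyClass_mul 0]
  refine (Q.homotopyClass_eq_windingLoop g hg hφ (by simp [φ]) ?_ fun c => ?_).symm
  · rw [show φ 1 = 2 * 1 - 1 + d from if_neg (by norm_num)]
    push_cast
    ring
  · simp only [φ, GenLoop.transAt, GenLoop.coe_copy, windingLoop_apply, Function.update_self,
      Function.update_of_ne one_ne_zero]
    split_ifs with h
    · rw [Set.projIcc_of_mem _ ⟨by linarith [(c 0).2.1], by linarith⟩]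
    · rw [Set.projIcc_of_mem _ ⟨by linarith, by linarith [(c 0).2.2]⟩, Q.add_int]
      simp

theorem homotopyClass_windingLoop (d : ℤ) :
    homotopyClass (Q.windingLoop g hg d) = homotopyClass (Q.windingLoop g hg 1) ^ d := by
  induction d using Int.induction_on with
  | zero => rw [homotopyClass_windingLoop_zero, zpow_zero]
  | succ n ih => rw [homotopyClass_windingLoop_add_one, ih, ← zpow_one_add, add_comm]
  | pred n ih =>
    have step := Q.homotopyClass_windingLoop_add_one g hg (-n - 1)
    rw [sub_add_cancel, ih] at step
    rw [zpow_sub_one, step, mul_comm, inv_mul_cancel_left]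

end WindingLoop

/-- A deformation of `X`, fixing `x₀`, that slides the meridian within itself to `x₀`. It lets
loops that are only known to have boundary on the meridian be based at `x₀`. -/
structure MeridianContraction (x₀ : X) where
  collapse : C(X, X)
  homotopy : (ContinuousMap.id X).HomotopyRel collapse {x₀}
  homotopy_meridian (u s : I) : ∃ s', homotopy (u, Q 0 s) = Q 0 s'
  collapse_meridian (s : I) : collapse (Q 0 s) = x₀

namespace MeridianContraction

variable {Q}

theorem apply_base (K : Q.MeridianContraction x₀) (g : C(X, Y)) (hg : ∀ s, g (Q 0 s) = y₀) :
    g x₀ = y₀ := by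
  obtain ⟨s, hs⟩ := K.homotopy_meridian 1 0
  rw [K.homotopy.apply_one, K.collapse_meridian] at hs
  rw [hs, hg]

variable (K : Q.MeridianContraction x₀)

/-- The class in the second homotopy group of the square wrapped once around the polar axis. -/
def fundamentalClass : HomotopyGroup (Fin 2) X x₀ :=
  homotopyClass (Q.windingLoop K.collapse K.collapse_meridian 1)

theorem homotopyGroupMap_fundamentalClass (g : C(X, Y)) (hg : ∀ s, g (Q 0 s) = y₀)
    (hgx : g x₀ = y₀) :
    homotopyGroupMap g hgx K.fundamentalClass = homotopyClass (Q.windingLoop g hg 1) := by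
  have hQ : Continuous fun v : I × (Fin 2 → I) => Q (v.2 0) (v.2 1) :=
    Q.continuous_comp (by fun_prop) (by fun_prop)
  refine (homotopyClass_eq_of_homotopy
    ⟨fun v => g (K.homotopy (v.1, Q (v.2 0) (v.2 1))), by fun_prop⟩ ?_ ?_ ?_).symm
  · simp [windingLoop_apply]
  · simp [windingLoop_apply]
  · intro u c hc
    obtain ⟨s, hs⟩ := Q.exists_meridian_of_mem_boundary (φ := fun t => (t : ℝ)) (m := 0) (n := 1)
      (by simp) (by simp) hc
    obtain ⟨s', hs'⟩ := K.homotopy_meridian u s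
    change g (K.homotopy (u, Q (c 0) (c 1))) = y₀
    rw [hs, hs', hg]

theorem homotopyGroupMap_fundamentalClass_eq_zpow (f : C(X, X)) (hfx : f x₀ = x₀) (d : ℤ)
    (hf : ∀ t s, f (Q t s) = Q (d * t) s) :
    homotopyGroupMap f hfx K.fundamentalClass = K.fundamentalClass ^ d := by
  have collapse_base : K.collapse x₀ = x₀ := K.apply_base _ K.collapse_meridian
  have collapse_comp (s : I) : (K.collapse.comp f) (Q 0 s) = x₀ := by
    simp [hf, K.collapse_meridian]
  calc homotopyGroupMap f hfx K.fundamentalClass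
      = homotopyGroupMap (y := x₀) (.id X) rfl (homotopyGroupMap f hfx K.fundamentalClass) :=
        (homotopyGroupMap_id _).symm
    _ = homotopyGroupMap K.collapse collapse_base (homotopyGroupMap f hfx K.fundamentalClass) :=
        homotopyGroupMap_eq_of_homotopyRel K.homotopy rfl _ _ _
    _ = homotopyGroupMap (K.collapse.comp f) (K.apply_base _ collapse_comp) K.fundamentalClass :=
        (homotopyGroupMap_comp _ _ _ _ _ _).symm
    _ = homotopyClass (Q.windingLoop (K.collapse.comp f) collapse_comp 1) :=
        K.homotopyGroupMap_fundamentalClass _ _ _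
    _ = homotopyClass (Q.windingLoop K.collapse K.collapse_meridian d) := by
        congr 1
        ext c
        simp [windingLoop_apply, hf]
    _ = K.fundamentalClass ^ d := Q.homotopyClass_windingLoop _ _ _

theorem exists_homotopyGroupMap_fundamentalClass_eq [T2Space X]
    (h_surj : ∀ x, ∃ t s : I, Q t s = x)
    (h_inj : ∀ c c' : Fin 2 → I, Q (c 0) (c 1) = Q (c' 0) (c' 1) →
      c = c' ∨ c ∈ Cube.boundary (Fin 2) ∧ c' ∈ Cube.boundary (Fin 2))
    (γ : HomotopyGroup (Fin 2) Y y₀) :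
    ∃ (g : C(X, Y)) (hgx : g x₀ = y₀), homotopyGroupMap g hgx K.fundamentalClass = γ := by
  obtain ⟨p, rfl⟩ := homotopyClass_surjective γ
  let q : C(Fin 2 → I, X) :=
    ⟨fun c => Q (c 0) (c 1), Q.continuous_comp (by fun_prop) (by fun_prop)⟩
  have q_surjective : Function.Surjective q := fun x => by
    obtain ⟨t, s, rfl⟩ := h_surj x
    exact ⟨![t, s], rfl⟩
  have q_quotient : Topology.IsQuotientMap q :=
    q.continuous.isClosedMap.isQuotientMap q.continuous q_surjective
  have p_factors : Function.FactorsThrough p.1 q := fun c c' h => by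
    rcases h_inj c c' h with rfl | ⟨hc, hc'⟩
    · rfl
    · rw [p.2 c hc, p.2 c' hc']
  let g : C(X, Y) := q_quotient.lift p.1 p_factors
  have g_comp (c : Fin 2 → I) : g (Q (c 0) (c 1)) = p c :=
    DFunLike.congr_fun (q_quotient.lift_comp p.1 p_factors) c
  have g_meridian (s : I) : g (Q 0 s) = y₀ :=
    (g_comp ![0, s]).trans (p.2 _ ⟨0, Or.inl rfl⟩)
  refine ⟨g, K.apply_base g g_meridian, ?_⟩
  rw [K.homotopyGroupMap_fundamentalClass g g_meridian]
  congr 1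
  ext c
  simp [windingLoop_apply, g_comp]

end MeridianContraction

end PolarCoordinates

/-! ### The Riemann sphere -/

open scoped OnePoint

section ExtNorm

variable {E : Type*} [NormedAddCommGroup E]

/-- The norm on the one-point compactification of a normed space, with the value `⊤` at `∞`. It
controls convergence to the poles `0` and `∞`. -/
def extNorm (x : OnePoint E) : ENNReal :=
  x.elim ⊤ fun z => ENNReal.ofReal ‖z‖

@[simp]
theorem extNorm_infty : extNorm (∞ : OnePoint E) = ⊤ :=
  rfl

@[simp]
theorem extNorm_coe (z : E) : extNorm (z : OnePoint E) = ENNReal.ofReal ‖z‖ :=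
  rfl

theorem extNorm_eq_top {x : OnePoint E} : extNorm x = ⊤ ↔ x = ∞ := by
  induction x using OnePoint.rec <;> simp

theorem extNorm_eq_zero {x : OnePoint E} : extNorm x = 0 ↔ x = (0 : E) := by
  induction x using OnePoint.rec <;> simp

variable {T Y : Type*} [TopologicalSpace T] [TopologicalSpace Y]

theorem continuousAt_prod_coe_iff {F : T × OnePoint E → Y} {t : T} {z : E} :
    ContinuousAt F (t, (z : OnePoint E)) ↔
      ContinuousAt (fun v : T × E => F (v.1, (v.2 : OnePoint E))) (t, z) :=
  ((Topology.IsOpenEmbedding.id (X := T)).prodMap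
    (OnePoint.isOpenEmbedding_coe (X := E))).continuousAt_iff (x := (t, z)) |>.symm

variable [ProperSpace E]

theorem continuous_extNorm : Continuous (extNorm : OnePoint E → ENNReal) := by
  rw [OnePoint.continuous_iff, Filter.coclosedCompact_eq_cocompact]
  exact ⟨ENNReal.tendsto_ofReal_atTop.comp tendsto_norm_cocompact_atTop,
    ENNReal.continuous_ofReal.comp continuous_norm⟩

theorem comap_extNorm_nhds {x : OnePoint E} (hx : extNorm x = 0 ∨ extNorm x = ⊤) :
    Filter.comap extNorm (𝓝 (extNorm x)) = 𝓝 x := by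
  have fiber : extNorm ⁻¹' {extNorm x} = {x} := by
    ext y
    rcases hx with hx | hx
    · simp [extNorm_eq_zero, extNorm_eq_zero.1 hx]
    · simp [extNorm_eq_top, extNorm_eq_top.1 hx]
  rw [continuous_extNorm.isClosedMap.comap_nhds_eq continuous_extNorm, fiber, nhdsSet_singleton]

theorem continuousAt_of_extNorm_squeeze {F : Y → OnePoint E} {lower upper : Y → ENNReal} {y : Y}
    (h_lower : ∀ y', lower y' ≤ extNorm (F y')) (h_upper : ∀ y', extNorm (F y') ≤ upper y')
    (lower_cont : ContinuousAt lower y) (upper_cont : ContinuousAt upper y)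
    (h_eq : lower y = upper y) (h_pole : extNorm (F y) = 0 ∨ extNorm (F y) = ⊤) :
    ContinuousAt F y := by
  have norm_eq_lower : extNorm (F y) = lower y :=
    ((h_upper y).trans_eq h_eq.symm).antisymm (h_lower y)
  have norm_eq_upper : extNorm (F y) = upper y := norm_eq_lower.trans h_eq
  rw [ContinuousAt, ← comap_extNorm_nhds h_pole, Filter.tendsto_comap_iff]
  refine tendsto_of_tendsto_of_tendsto_of_le_of_le ?_ ?_ h_lower h_upper
  · exact norm_eq_lower ▸ lower_cont
  · exact norm_eq_upper ▸ upper_cont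

end ExtNorm

/-! ### Angular powers -/

/-- The map `r e^{iθ} ↦ r e^{idθ}`. -/
def angularPow (d : ℤ) (z : ℂ) : ℂ :=
  ‖z‖ * (z / ‖z‖) ^ d

@[simp]
theorem angularPow_zero (d : ℤ) : angularPow d 0 = 0 := by
  simp [angularPow]

theorem angularPow_one (z : ℂ) : angularPow 1 z = z := by
  rcases eq_or_ne z 0 with rfl | hz
  · simp
  · have : (‖z‖ : ℂ) ≠ 0 := by simpa using hz
    rw [angularPow, zpow_one]
    field_simp

theorem angularPow_mul (d : ℤ) (z w : ℂ) :
    angularPow d (z * w) = angularPow d z * angularPow d w := by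
  simp only [angularPow, norm_mul, Complex.ofReal_mul, mul_div_mul_comm, mul_zpow]
  ring

theorem angularPow_exp (d : ℤ) (w : ℂ) :
    angularPow d (Complex.exp w) = Complex.exp (w.re + d * (w.im * Complex.I)) := by
  have direction : Complex.exp w / Real.exp w.re = Complex.exp (w.im * Complex.I) := by
    rw [Complex.ofReal_exp, ← Complex.exp_sub]
    congr 1
    nth_rewrite 1 [← Complex.re_add_im w]
    ring
  rw [angularPow, Complex.norm_exp, direction, ← Complex.exp_int_mul, Complex.ofReal_exp,
    ← Complex.exp_add]

theorem angularPow_ofReal (d : ℤ) {r : ℝ} (hr : 0 ≤ r) : angularPow d r = r := by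
  rcases hr.eq_or_lt with rfl | hr
  · simp
  · have : (r : ℂ) ≠ 0 := by exact_mod_cast hr.ne'
    simp [angularPow, abs_of_pos hr, div_self this]

theorem norm_angularPow (d : ℤ) (z : ℂ) : ‖angularPow d z‖ = ‖z‖ := by
  rcases eq_or_ne z 0 with rfl | hz
  · simp
  · simp [angularPow, div_self (norm_ne_zero_iff.2 hz)]

theorem continuousAt_angularPow (d : ℤ) {z : ℂ} (hz : z ≠ 0) : ContinuousAt (angularPow d) z := by
  have hz' : (‖z‖ : ℂ) ≠ 0 := by simpa using hz
  have norm_cont : ContinuousAt (fun w : ℂ => (‖w‖ : ℂ)) z := by fun_prop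
  exact norm_cont.mul ((continuousAt_id.div norm_cont hz').zpow₀ d (Or.inl (div_ne_zero hz hz')))

/-- The self-map `r e^{iθ} ↦ r e^{idθ} e^{G(r e^{iθ})}` of the Riemann sphere, fixing `0` and `∞`;
the value of `G` at `0` is irrelevant. -/
def twistedPow (d : ℤ) (G : ℂ → ℂ) (x : OnePoint ℂ) : OnePoint ℂ :=
  x.map fun z => angularPow d z * Complex.exp (G z)

section TwistedPow

variable {d d' : ℤ} {G G' : ℂ → ℂ}

@[simp]
theorem twistedPow_infty : twistedPow d G ∞ = ∞ :=
  rfl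

@[simp]
theorem twistedPow_coe (z : ℂ) :
    twistedPow d G z = ((angularPow d z * Complex.exp (G z) : ℂ) : OnePoint ℂ) :=
  rfl

theorem extNorm_twistedPow_coe (z : ℂ) :
    extNorm (twistedPow d G z) = ENNReal.ofReal (‖z‖ * Real.exp (G z).re) := by
  simp [norm_angularPow, Complex.norm_exp]

theorem twistedPow_one_zero : twistedPow 1 0 = id := by
  ext x
  induction x using OnePoint.rec <;> simp [angularPow_one]

theorem twistedPow_zero_comp_twistedPow_one (x : OnePoint ℂ) :
    twistedPow d 0 (twistedPow 1 G x) =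
      twistedPow d (fun z => (G z).re + d * ((G z).im * Complex.I)) x := by
  induction x using OnePoint.rec with
  | infty => rfl
  | coe z => simp [angularPow_one, angularPow_mul, angularPow_exp]

theorem extNorm_twistedPow_mem_uIcc (h_re : ∀ z, (G' z).re ∈ Set.uIcc 0 (G z).re)
    (x : OnePoint ℂ) :
    extNorm (twistedPow d' G' x) ∈ Set.uIcc (extNorm x) (extNorm (twistedPow d G x)) := by
  induction x using OnePoint.rec with
  | infty => simp
  | coe z =>
    let radius : ℝ → ENNReal := fun a => ENNReal.ofReal (‖z‖ * Real.exp a)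
    have radius_mono : Monotone radius := fun a b hab =>
      ENNReal.ofReal_le_ofReal (by gcongr)
    have radius_zero : extNorm (z : OnePoint ℂ) = radius 0 := by simp [radius]
    rw [extNorm_twistedPow_coe, extNorm_twistedPow_coe, radius_zero]
    exact (radius_mono.mapsTo_uIcc (h_re z) :)

-- At the poles, `twistedPow d' (H t)` is squeezed between the identity and `twistedPow d G`.
theorem continuous_uncurry_twistedPow (hG : Continuous (twistedPow d G)) {T : Type*}
    [TopologicalSpace T] {H : T → ℂ → ℂ}
    (hH : ∀ t, ∀ z ≠ 0, ContinuousAt (fun v : T × ℂ => H v.1 v.2) (t, z))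
    (h_re : ∀ t z, (H t z).re ∈ Set.uIcc 0 (G z).re) (d' : ℤ) :
    Continuous fun v : T × OnePoint ℂ => twistedPow d' (H v.1) v.2 := by
  have norm_cont : Continuous fun v : T × OnePoint ℂ => extNorm v.2 :=
    continuous_extNorm.comp continuous_snd
  have twist_cont : Continuous fun v : T × OnePoint ℂ => extNorm (twistedPow d G v.2) :=
    continuous_extNorm.comp (hG.comp continuous_snd)
  have at_pole (t : T) (x : OnePoint ℂ) (h_eq : extNorm x = extNorm (twistedPow d G x))
      (hx : extNorm (twistedPow d' (H t) x) = 0 ∨ extNorm (twistedPow d' (H t) x) = ⊤) :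
      ContinuousAt (fun v : T × OnePoint ℂ => twistedPow d' (H v.1) v.2) (t, x) :=
    continuousAt_of_extNorm_squeeze
      (fun v => (extNorm_twistedPow_mem_uIcc (h_re v.1) v.2).1)
      (fun v => (extNorm_twistedPow_mem_uIcc (h_re v.1) v.2).2)
      (norm_cont.min twist_cont).continuousAt (norm_cont.max twist_cont).continuousAt
      (by simp [← h_eq]) hx
  rw [continuous_iff_continuousAt]
  rintro ⟨t, x⟩
  induction x using OnePoint.rec with
  | infty => exact at_pole t ∞ (by simp) (by simp)
  | coe z =>
    rcases eq_or_ne z 0 with rfl | hz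
    · exact at_pole t _ (by simp) (by simp)
    · rw [continuousAt_prod_coe_iff]
      have power_cont : ContinuousAt (fun v : T × ℂ => angularPow d' v.2) (t, z) :=
        ContinuousAt.comp (f := Prod.snd) (continuousAt_angularPow d' hz) continuousAt_snd
      exact OnePoint.continuous_coe.continuousAt.comp (power_cont.mul (hH t z hz).cexp)

end TwistedPow

/-! ### Möbius transformations -/

section Mobius

variable {𝕜 : Type*} [NormedField 𝕜]

open scoped Classical in
/-- The inversion `z ↦ z⁻¹` of the projective line, exchanging `0` and `∞`. -/
def projInv (x : OnePoint 𝕜) : OnePoint 𝕜 :=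
  x.elim (0 : 𝕜) fun z => if z = 0 then ∞ else (z⁻¹ : 𝕜)

@[simp]
theorem projInv_infty : projInv (∞ : OnePoint 𝕜) = (0 : 𝕜) :=
  rfl

@[simp]
theorem projInv_zero : projInv ((0 : 𝕜) : OnePoint 𝕜) = ∞ :=
  if_pos rfl

theorem projInv_coe {z : 𝕜} (hz : z ≠ 0) : projInv (z : OnePoint 𝕜) = (z⁻¹ : 𝕜) :=
  if_neg hz

theorem projInv_involutive : Function.Involutive (projInv : OnePoint 𝕜 → OnePoint 𝕜) := by
  intro x
  induction x using OnePoint.rec with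
  | infty => simp
  | coe z =>
    rcases eq_or_ne z 0 with rfl | hz
    · simp
    · rw [projInv_coe hz, projInv_coe (inv_ne_zero hz), inv_inv]

theorem extNorm_projInv (x : OnePoint 𝕜) : extNorm (projInv x) = (extNorm x)⁻¹ := by
  induction x using OnePoint.rec with
  | infty => simp
  | coe z =>
    rcases eq_or_ne z 0 with rfl | hz
    · simp
    · simp [projInv_coe hz, ENNReal.ofReal_inv_of_pos (norm_pos_iff.2 hz)]

/-- The affine map `z ↦ a z + b` as a homeomorphism of the projective line, fixing `∞`. -/
def projAffine (a b : 𝕜) (ha : a ≠ 0) : OnePoint 𝕜 ≃ₜ OnePoint 𝕜 :=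
  ((Homeomorph.mulLeft₀ a ha).trans (Homeomorph.addRight b)).onePointCongr

@[simp]
theorem projAffine_infty (a b : 𝕜) (ha : a ≠ 0) : projAffine a b ha ∞ = ∞ :=
  rfl

@[simp]
theorem projAffine_coe (a b : 𝕜) (ha : a ≠ 0) (z : 𝕜) :
    projAffine a b ha z = ((a * z + b : 𝕜) : OnePoint 𝕜) :=
  rfl

variable [ProperSpace 𝕜]

theorem continuous_projInv : Continuous (projInv : OnePoint 𝕜 → OnePoint 𝕜) := by
  have norm_cont : Continuous fun x : OnePoint 𝕜 => extNorm (projInv x) := by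
    simp only [extNorm_projInv]
    exact continuous_extNorm.inv
  have at_pole (x : OnePoint 𝕜) (hx : extNorm (projInv x) = 0 ∨ extNorm (projInv x) = ⊤) :
      ContinuousAt projInv x :=
    continuousAt_of_extNorm_squeeze (fun _ => le_rfl) (fun _ => le_rfl) norm_cont.continuousAt
      norm_cont.continuousAt rfl hx
  rw [continuous_iff_continuousAt]
  intro x
  induction x using OnePoint.rec with
  | infty => exact at_pole ∞ (by simp)
  | coe z =>
    rcases eq_or_ne z 0 with rfl | hz
    · exact at_pole _ (by simp)
    · rw [OnePoint.continuousAt_coe]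
      have inv_cont : ContinuousAt (fun w : 𝕜 => ((w⁻¹ : 𝕜) : OnePoint 𝕜)) z :=
        OnePoint.continuous_coe.continuousAt.comp (continuousAt_inv₀ hz)
      refine inv_cont.congr ?_
      filter_upwards [isOpen_ne.mem_nhds hz] with w hw using (projInv_coe hw).symm

variable (𝕜) in
/-- Inversion as a homeomorphism of the projective line. -/
def projInvHomeo : OnePoint 𝕜 ≃ₜ OnePoint 𝕜 where
  toEquiv := projInv_involutive.toPerm
  continuous_toFun := continuous_projInv
  continuous_invFun := continuous_projInv

@[simp]
theorem projInvHomeo_apply (x : OnePoint 𝕜) : projInvHomeo 𝕜 x = projInv x :=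
  rfl

theorem exists_homeomorph_apply_eq_infty (x : OnePoint 𝕜) :
    ∃ e : OnePoint 𝕜 ≃ₜ OnePoint 𝕜, e x = ∞ := by
  induction x using OnePoint.rec with
  | infty => exact ⟨.refl _, rfl⟩
  | coe z => exact ⟨(projAffine 1 (-z) one_ne_zero).trans (projInvHomeo 𝕜), by simp⟩

theorem exists_homeomorph_zero_infty_one {x y z : OnePoint 𝕜} (hxy : x ≠ y) (hxz : x ≠ z)
    (hyz : y ≠ z) :
    ∃ e : OnePoint 𝕜 ≃ₜ OnePoint 𝕜, e (0 : 𝕜) = x ∧ e ∞ = y ∧ e (1 : 𝕜) = z := by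
  obtain ⟨e, he⟩ := exists_homeomorph_apply_eq_infty y
  obtain ⟨a, ha⟩ := OnePoint.ne_infty_iff_exists.1 fun h => hxy (e.injective (h.trans he.symm))
  obtain ⟨b, hb⟩ := OnePoint.ne_infty_iff_exists.1 fun h => hyz (e.injective (he.trans h.symm))
  have hab : b - a ≠ 0 := sub_ne_zero.2 fun h => hxz (e.injective (by rw [← ha, ← hb, h]))
  refine ⟨(projAffine (b - a) a hab).trans e.symm, ?_, ?_, ?_⟩ <;>
    simp [e.symm_apply_eq, ha, hb, he]

end Mobius

theorem exists_lift_of_ne_infty {X E : Type*} [TopologicalSpace X] [TopologicalSpace E]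
    (g : C(X, OnePoint E)) (hg : ∀ x, g x ≠ ∞) : ∃ h : C(X, E), ∀ x, (h x : OnePoint E) = g x := by
  choose h hh using fun x => OnePoint.ne_infty_iff_exists.1 (hg x)
  refine ⟨⟨h, OnePoint.isOpenEmbedding_coe.isInducing.continuous_iff.2 ?_⟩, hh⟩
  simpa only [Function.comp_def, hh] using g.continuous

theorem homotopyGroupMap_eq_one_of_not_surjective {N X 𝕜 : Type*} [DecidableEq N] [Nonempty N]
    [TopologicalSpace X] [NormedField 𝕜] [ProperSpace 𝕜] [NormedSpace ℝ 𝕜]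
    {x : X} {y : OnePoint 𝕜} (g : C(X, OnePoint 𝕜)) (hgx : g x = y)
    (hg : ¬ Function.Surjective g) (γ : HomotopyGroup N X x) : homotopyGroupMap g hgx γ = 1 := by
  obtain ⟨w, hw⟩ := not_forall.1 hg
  obtain ⟨e, he⟩ := exists_homeomorph_apply_eq_infty w
  obtain ⟨h, hh⟩ := exists_lift_of_ne_infty ((e : C(OnePoint 𝕜, OnePoint 𝕜)).comp g)
    fun x' hx' => hw ⟨x', e.injective (hx'.trans he.symm)⟩
  let coe : C(𝕜, OnePoint 𝕜) := ⟨(↑), OnePoint.continuous_coe⟩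
  have factor : (e : C(OnePoint 𝕜, OnePoint 𝕜)).comp g = coe.comp h :=
    ContinuousMap.ext fun x' => (hh x').symm
  have base : coe (h x) = e y := (hh x).trans (congrArg e hgx)
  apply (homotopyGroupCongr e rfl).injective
  rw [map_one, homotopyGroupCongr_apply, ← homotopyGroupMap_comp _ _ _ _ (congrArg e hgx)]
  simp only [factor]
  rw [homotopyGroupMap_comp _ _ base rfl, homotopyGroup_eq_one_of_module (homotopyGroupMap h rfl γ),
    map_one]

/-! ### Polar coordinates on the Riemann sphere -/

/-- The Möbius transformation `z ↦ z / (1 - z)`, carrying the segment `[0, 1]` to the ray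
`[0, ∞]`. -/
def rayHomeo : OnePoint ℂ ≃ₜ OnePoint ℂ :=
  ((projAffine (-1) 1 (by norm_num)).trans (projInvHomeo ℂ)).trans (projAffine 1 (-1) one_ne_zero)

theorem rayHomeo_one : rayHomeo (1 : ℂ) = ∞ := by
  simp [rayHomeo]

theorem rayHomeo_coe {z : ℂ} (hz : z ≠ 1) : rayHomeo z = ((z / (1 - z) : ℂ) : OnePoint ℂ) := by
  have hz' : 1 - z ≠ 0 := sub_ne_zero.2 hz.symm
  have hz'' : -z + 1 ≠ 0 := by rwa [neg_add_eq_sub]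
  simp only [rayHomeo, Homeomorph.trans_apply, projInvHomeo_apply, projAffine_coe, neg_one_mul,
    projInv_coe hz'', one_mul]
  congr 1
  rw [neg_add_eq_sub]
  field_simp
  ring

/-- The parametrization of the ray `[0, ∞]` of the Riemann sphere by the unit interval. -/
def ray (s : I) : OnePoint ℂ :=
  rayHomeo ((s : ℝ) : ℂ)

theorem continuous_ray : Continuous ray :=
  rayHomeo.continuous.comp (OnePoint.continuous_coe.comp (by fun_prop))

theorem ray_zero : ray 0 = (0 : ℂ) := by
  simp [ray, rayHomeo_coe]

theorem ray_one : ray 1 = ∞ := by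
  simp [ray, rayHomeo_one]

theorem ray_injective : Function.Injective ray := fun _ _ h =>
  Subtype.ext (Complex.ofReal_injective (OnePoint.coe_injective (rayHomeo.injective h)))

theorem ray_eq_infty_or_ofReal (s : I) : ray s = ∞ ∨ ∃ r : ℝ, 0 ≤ r ∧ ray s = (r : ℂ) := by
  rcases eq_or_ne s 1 with rfl | hs
  · exact Or.inl ray_one
  · have hs' : (s : ℂ) ≠ 1 := fun h => hs (Subtype.ext (by exact_mod_cast h))
    refine Or.inr ⟨s / (1 - s), div_nonneg s.2.1 (sub_nonneg.2 s.2.2), ?_⟩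
    rw [ray, rayHomeo_coe hs']
    push_cast
    rfl

theorem exists_ray_eq {r : ℝ} (hr : 0 ≤ r) : ∃ s, ray s = (r : ℂ) := by
  have hr' : 0 < 1 + r := by positivity
  have hs : r / (1 + r) < 1 := by rw [div_lt_one hr']; linarith
  have hs' : ((r / (1 + r) : ℝ) : ℂ) ≠ 1 := by exact_mod_cast hs.ne
  refine ⟨⟨r / (1 + r), by positivity, hs.le⟩, ?_⟩
  rw [ray, rayHomeo_coe hs', OnePoint.coe_eq_coe]
  norm_cast
  field_simp
  ring

theorem eq_of_extNorm_ray_eq {s s' : I} (h : extNorm (ray s) = extNorm (ray s')) : s = s' := by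
  apply ray_injective
  rcases ray_eq_infty_or_ofReal s with hs | ⟨r, hr, hs⟩ <;>
    rcases ray_eq_infty_or_ofReal s' with hs' | ⟨r', hr', hs'⟩ <;>
    simp_all [abs_of_nonneg]

theorem twistedPow_ray (d d' : ℤ) (G : ℂ → ℂ) (s : I) :
    twistedPow d G (ray s) = twistedPow d' G (ray s) := by
  rcases ray_eq_infty_or_ofReal s with hs | ⟨r, hr, hs⟩
  · simp [hs]
  · simp [hs, angularPow_ofReal _ hr]

/-- Rotation of the Riemann sphere about `0` and `∞` by the angle `2πt`. -/
def rotate (t : ℝ) (x : OnePoint ℂ) : OnePoint ℂ :=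
  twistedPow 1 (fun _ => (2 * Real.pi * t : ℝ) * Complex.I) x

@[simp]
theorem rotate_infty (t : ℝ) : rotate t ∞ = ∞ :=
  rfl

@[simp]
theorem rotate_coe (t : ℝ) (z : ℂ) :
    rotate t z = ((z * Complex.exp ((2 * Real.pi * t : ℝ) * Complex.I) : ℂ) : OnePoint ℂ) := by
  simp [rotate, angularPow_one]

theorem rotate_zero (x : OnePoint ℂ) : rotate 0 x = x := by
  induction x using OnePoint.rec <;> simp

theorem rotate_periodic (x : OnePoint ℂ) : Function.Periodic (rotate · x) 1 := by
  intro t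
  induction x using OnePoint.rec with
  | infty => rfl
  | coe z =>
    simp only [rotate_coe]
    congr 2
    exact Complex.exp_eq_exp_iff_exists_int.2 ⟨1, by push_cast; ring⟩

theorem extNorm_rotate (t : ℝ) (x : OnePoint ℂ) : extNorm (rotate t x) = extNorm x := by
  induction x using OnePoint.rec with
  | infty => rfl
  | coe z => simp [Complex.norm_exp]

theorem continuous_rotate : Continuous fun v : ℝ × OnePoint ℂ => rotate v.1 v.2 :=
  continuous_uncurry_twistedPow (d := 1) (G := 0)
    (H := fun t _ => (2 * Real.pi * t : ℝ) * Complex.I)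
    (by rw [twistedPow_one_zero]; exact continuous_id) (fun _ _ _ => by fun_prop) (by simp) 1

/-- Polar coordinates on the Riemann sphere, with poles `0` and `∞` and meridian the ray
`[0, ∞]`. -/
def riemannPolar : PolarCoordinates (OnePoint ℂ) where
  toFun t s := rotate t (ray s)
  continuous_toFun :=
    continuous_rotate.comp (continuous_fst.prodMk (continuous_ray.comp continuous_snd))
  periodic s := rotate_periodic (ray s)
  apply_zero t := by simp [ray_zero]
  apply_one t := by simp [ray_one]

theorem riemannPolar_apply (t : ℝ) (s : I) : riemannPolar t s = rotate t (ray s) :=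
  rfl

theorem twistedPow_riemannPolar (d : ℤ) (t : ℝ) (s : I) :
    twistedPow d 0 (riemannPolar t s) = riemannPolar (d * t) s := by
  rw [riemannPolar_apply, rotate, twistedPow_zero_comp_twistedPow_one, twistedPow_ray d 1,
    riemannPolar_apply, rotate]
  congr 1
  funext _
  apply Complex.ext <;> simp [mul_left_comm]

theorem exists_riemannPolar_eq (x : OnePoint ℂ) : ∃ t s : I, riemannPolar t s = x := by
  induction x using OnePoint.rec with
  | infty => exact ⟨0, 1, by simp [riemannPolar_apply, ray_one]⟩
  | coe z =>
    obtain ⟨s, hs⟩ := exists_ray_eq (norm_nonneg z)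
    let t : ℝ := z.arg / (2 * Real.pi)
    have angle : 2 * Real.pi * t = z.arg := by simp only [t]; field_simp
    refine ⟨⟨Int.fract t, Int.fract_nonneg t, (Int.fract_lt_one t).le⟩, s, ?_⟩
    rw [← riemannPolar.add_int _ ⌊t⌋]
    simp only [Int.fract_add_floor, riemannPolar_apply, hs, rotate_coe, angle]
    rw [Complex.norm_mul_exp_arg_mul_I]

theorem eq_or_mem_boundary_of_exp_eq {t t' : I}
    (h : Complex.exp ((2 * Real.pi * t : ℝ) * Complex.I) =
      Complex.exp ((2 * Real.pi * t' : ℝ) * Complex.I)) :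
    t = t' ∨ (t = 0 ∨ t = 1) ∧ (t' = 0 ∨ t' = 1) := by
  obtain ⟨n, hn⟩ := Complex.exp_eq_exp_iff_exists_int.1 h
  have diff : (t : ℝ) = t' + n := by
    have diff' : (t : ℂ) = t' + n := by
      apply mul_right_cancel₀ Complex.two_pi_I_ne_zero
      push_cast at hn
      linear_combination hn
    exact_mod_cast diff'
  have n_le : n ≤ 1 := by exact_mod_cast (by linarith [t.2.2, t'.2.1] : (n : ℝ) ≤ 1)
  have le_n : -1 ≤ n := by exact_mod_cast (by linarith [t.2.1, t'.2.2] : (-1 : ℝ) ≤ n)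
  simp only [Subtype.ext_iff, Set.Icc.coe_zero, Set.Icc.coe_one]
  interval_cases n <;> push_cast at diff
  · right; exact ⟨Or.inl (by linarith [t.2.1, t'.2.2]), Or.inr (by linarith [t.2.1, t'.2.2])⟩
  · left; linarith
  · right; exact ⟨Or.inr (by linarith [t.2.2, t'.2.1]), Or.inl (by linarith [t.2.2, t'.2.1])⟩

theorem eq_or_mem_boundary_of_riemannPolar_eq {c c' : Fin 2 → I}
    (h : riemannPolar (c 0) (c 1) = riemannPolar (c' 0) (c' 1)) :
    c = c' ∨ c ∈ Cube.boundary (Fin 2) ∧ c' ∈ Cube.boundary (Fin 2) := by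
  have latitude : c 1 = c' 1 := eq_of_extNorm_ray_eq <| by
    simpa only [riemannPolar_apply, extNorm_rotate] using congrArg extNorm h
  by_cases pole : c 1 = 0 ∨ c 1 = 1
  · exact Or.inr ⟨⟨1, pole⟩, ⟨1, latitude ▸ pole⟩⟩
  obtain ⟨h_zero, h_one⟩ := not_or.1 pole
  obtain ⟨r, -, hr⟩ := (ray_eq_infty_or_ofReal (c 1)).resolve_left
    fun h => h_one (ray_injective (h.trans ray_one.symm))
  have r_ne_zero : (r : ℂ) ≠ 0 := fun h =>
    h_zero (ray_injective (by rw [hr, h, ray_zero]))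
  simp only [riemannPolar_apply, ← latitude, hr, rotate_coe, OnePoint.coe_eq_coe] at h
  rcases eq_or_mem_boundary_of_exp_eq (mul_left_cancel₀ r_ne_zero h) with longitude | ⟨hc, hc'⟩
  · exact Or.inl (funext (Fin.forall_fin_two.2 ⟨longitude, latitude⟩))
  · exact Or.inr ⟨⟨0, hc⟩, ⟨0, hc'⟩⟩

/-! ### Sliding along the ray -/

theorem continuous_map_add_of_norm_le {T E : Type*} [TopologicalSpace T] [NormedAddCommGroup E]
    [ProperSpace E] {δ : T × E → E} (hδ : Continuous δ) {C : ℝ} (h_norm : ∀ v, ‖δ v‖ ≤ C) :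
    Continuous fun v : T × OnePoint E => v.2.map fun z => z + δ (v.1, z) := by
  have lower (v : T × OnePoint E) :
      extNorm v.2 - ENNReal.ofReal C ≤ extNorm (v.2.map fun z => z + δ (v.1, z)) := by
    obtain ⟨t, x⟩ := v
    induction x using OnePoint.rec with
    | infty => exact le_top
    | coe z =>
      rw [tsub_le_iff_right]
      have C_nonneg : 0 ≤ C := (norm_nonneg _).trans (h_norm (t, z))
      have reverse_triangle : ‖z‖ ≤ ‖z + δ (t, z)‖ + C :=
        (norm_le_norm_add_norm_sub' z (z + δ (t, z))).trans (by simpa using h_norm (t, z))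
      calc extNorm (z : OnePoint E)
          ≤ ENNReal.ofReal (‖z + δ (t, z)‖ + C) := ENNReal.ofReal_le_ofReal reverse_triangle
        _ = _ := ENNReal.ofReal_add (norm_nonneg _) C_nonneg
  have lower_cont : Continuous fun v : T × OnePoint E => extNorm v.2 - ENNReal.ofReal C :=
    (ENNReal.continuous_sub_right _).comp (continuous_extNorm.comp continuous_snd)
  rw [continuous_iff_continuousAt]
  rintro ⟨t, x⟩
  induction x using OnePoint.rec with
  | infty =>
    exact continuousAt_of_extNorm_squeeze lower (fun _ => le_top) lower_cont.continuousAt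
      continuousAt_const (by simp) (Or.inr rfl)
  | coe z =>
    rw [continuousAt_prod_coe_iff]
    have sum_cont : Continuous fun v : T × E => v.2 + δ (v.1, v.2) := by fun_prop
    exact (OnePoint.continuous_coe.comp sum_cont).continuousAt

/-- At time `u`, moves every point of the unit segment the fraction `u` of its way to `c`; the
other points of the plane are translated in parallel with the nearest point of their line. -/
def segmentContraction (c u : I) (x : OnePoint ℂ) : OnePoint ℂ :=
  x.map fun z => z + ((u * (c - Set.projIcc (0 : ℝ) 1 zero_le_one z.re) : ℝ) : ℂ)

theorem continuous_segmentContraction (c : I) :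
    Continuous fun v : I × OnePoint ℂ => segmentContraction c v.1 v.2 := by
  refine continuous_map_add_of_norm_le (T := I) (C := 1)
    (δ := fun v => ((v.1 * (c - Set.projIcc (0 : ℝ) 1 zero_le_one v.2.re) : ℝ) : ℂ))
    (by fun_prop) fun v => ?_
  rw [Complex.norm_real, Real.norm_eq_abs, abs_mul, abs_of_nonneg v.1.2.1]
  refine mul_le_one₀ v.1.2.2 (abs_nonneg _) ?_
  have nearest := (Set.projIcc (0 : ℝ) 1 zero_le_one v.2.re).2
  simpa using abs_sub_le_of_le_of_le c.2.1 c.2.2 nearest.1 nearest.2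

theorem segmentContraction_zero (c : I) (x : OnePoint ℂ) : segmentContraction c 0 x = x := by
  induction x using OnePoint.rec <;> simp [segmentContraction]

theorem segmentContraction_ofReal (c u s : I) :
    segmentContraction c u ((s : ℝ) : ℂ) = ((s + u * (c - s) : ℝ) : ℂ) := by
  simp [segmentContraction]

/-- The deformation of the Riemann sphere that slides the ray `[0, ∞]` to its point `ray c`. -/
def raySlide (c : I) : C(I × OnePoint ℂ, OnePoint ℂ) where
  toFun v := rayHomeo (segmentContraction c v.1 (rayHomeo.symm v.2))
  continuous_toFun := rayHomeo.continuous.comp <| (continuous_segmentContraction c).comp <|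
    continuous_fst.prodMk (rayHomeo.symm.continuous.comp continuous_snd)

theorem raySlide_apply (c u : I) (x : OnePoint ℂ) :
    raySlide c (u, x) = rayHomeo (segmentContraction c u (rayHomeo.symm x)) :=
  rfl

theorem raySlide_zero (c : I) (x : OnePoint ℂ) : raySlide c (0, x) = x := by
  simp [raySlide_apply, segmentContraction_zero]

theorem raySlide_ray (c u s : I) :
    raySlide c (u, ray s) = rayHomeo ((s + u * (c - s) : ℝ) : ℂ) := by
  simp only [raySlide_apply, ray, Homeomorph.symm_apply_apply, segmentContraction_ofReal]

theorem raySlide_one_ray (c s : I) : raySlide c (1, ray s) = ray c := by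
  rw [raySlide_ray, ray]
  simp

theorem raySlide_ray_self (c u : I) : raySlide c (u, ray c) = ray c := by
  rw [raySlide_ray, ray]
  simp

theorem exists_raySlide_ray_eq (c u s : I) : ∃ s', raySlide c (u, ray s) = ray s' :=
  ⟨⟨_, (convex_Icc (0 : ℝ) 1).add_smul_sub_mem s.2 c.2 u.2⟩, raySlide_ray c u s⟩

theorem riemannPolar_meridian (s : I) : riemannPolar 0 s = ray s :=
  rotate_zero (ray s)

/-- The sliding of the ray as a contraction of the meridian of the polar coordinates. -/
def rayContraction (c : I) : riemannPolar.MeridianContraction (ray c) where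
  collapse := (raySlide c).curry 1
  homotopy :=
    { toContinuousMap := raySlide c
      map_zero_left := raySlide_zero c
      map_one_left _ := rfl
      prop' u := by
        rintro _ rfl
        exact raySlide_ray_self c u }
  homotopy_meridian u s := by
    simp only [riemannPolar_meridian]
    exact exists_raySlide_ray_eq c u s
  collapse_meridian s := by
    rw [riemannPolar_meridian]
    exact raySlide_one_ray c s

theorem fundamentalClass_rayContraction_ne_one (c : I)
    [Nontrivial (HomotopyGroup (Fin 2) (OnePoint ℂ) (ray c))] :
    (rayContraction c).fundamentalClass ≠ 1 := by
  intro h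
  obtain ⟨γ, hγ⟩ := exists_ne (1 : HomotopyGroup (Fin 2) (OnePoint ℂ) (ray c))
  obtain ⟨g, hg, rfl⟩ := (rayContraction c).exists_homotopyGroupMap_fundamentalClass_eq
    exists_riemannPolar_eq (fun _ _ => eq_or_mem_boundary_of_riemannPolar_eq) γ
  rw [h, map_one] at hγ
  exact hγ rfl

/-! ### Logarithms of self-maps of the punctured plane -/

theorem exists_continuous_log_comp_exp {φ : ℂ → ℂ} (hφ : Continuous φ) (h_ne : ∀ z ≠ 0, φ z ≠ 0)
    (h_one : φ 1 = 1) :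
    ∃ (L : C(ℂ, ℂ)) (d : ℤ), L 0 = 0 ∧ (∀ w, Complex.exp (L w) = φ (Complex.exp w)) ∧
      ∀ w, L (w + 2 * Real.pi * Complex.I) = L w + d * (2 * Real.pi * Complex.I) := by
  obtain ⟨L, ⟨L_zero, exp_comp_L⟩, L_unique⟩ :=
    Complex.isCoveringMapOn_exp.existsUnique_continuousMap_lifts
      (⟨fun w => φ (Complex.exp w), by fun_prop⟩ : C(ℂ, ℂ)) (a₀ := 0) (e₀ := 0)
      (by simp [h_one]) (fun w => by simpa using h_ne _ (Complex.exp_ne_zero w))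
  have exp_L (w : ℂ) : Complex.exp (L w) = φ (Complex.exp w) := congrFun exp_comp_L w
  obtain ⟨d, hd⟩ : ∃ d : ℤ, L (2 * Real.pi * Complex.I) = d * (2 * Real.pi * Complex.I) := by
    rw [← Complex.exp_eq_one_iff, exp_L, Complex.exp_two_pi_mul_I, h_one]
  let translate : C(ℂ, ℂ) :=
    ⟨fun w => L (w + 2 * Real.pi * Complex.I) - d * (2 * Real.pi * Complex.I), by fun_prop⟩
  have exp_translate (w : ℂ) : Complex.exp (translate w) = φ (Complex.exp w) := by
    simp only [translate, ContinuousMap.coe_mk, Complex.exp_sub, exp_L,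
      Complex.exp_int_mul_two_pi_mul_I, div_one, Complex.exp_add, Complex.exp_two_pi_mul_I, mul_one]
  have translate_eq : translate = L := L_unique _ ⟨by simp [translate, hd], funext exp_translate⟩
  refine ⟨L, d, L_zero, exp_L, fun w => ?_⟩
  exact sub_eq_iff_eq_add.1 (DFunLike.congr_fun translate_eq w)

section Periodic

variable {Y : Type*} {E : ℂ → Y}

theorem apply_log_exp_of_periodic (h_per : Function.Periodic E (2 * Real.pi * Complex.I))
    (w : ℂ) : E (Complex.log (Complex.exp w)) = E w := by
  obtain ⟨n, hn⟩ := Complex.exp_eq_exp_iff_exists_int.1 (Complex.exp_log (Complex.exp_ne_zero w))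
  rw [hn, h_per.int_mul n w]

theorem continuousAt_comp_log_of_periodic [TopologicalSpace Y]
    (h_per : Function.Periodic E (2 * Real.pi * Complex.I)) (hE : Continuous E) {z : ℂ}
    (hz : z ≠ 0) : ContinuousAt (fun z => E (Complex.log z)) z := by
  -- Near `z` replace `log` by the branch `log z + log (· / z)`, which is continuous there.
  have branch_cont : ContinuousAt (fun z' => E (Complex.log z + Complex.log (z' / z))) z := by
    refine hE.continuousAt.comp (continuousAt_const.add (.clog (by fun_prop) ?_))
    rw [div_self hz]
    exact Complex.one_mem_slitPlane
  refine branch_cont.congr ?_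
  filter_upwards [isOpen_ne.mem_nhds hz] with z' hz'
  rw [← apply_log_exp_of_periodic h_per, Complex.exp_add, Complex.exp_log hz,
    Complex.exp_log (div_ne_zero hz' hz), mul_div_cancel₀ _ hz]

end Periodic

theorem exists_eq_angularPow_mul_exp {φ : ℂ → ℂ} (hφ : Continuous φ) (h_ne : ∀ z ≠ 0, φ z ≠ 0)
    (h_one : φ 1 = 1) :
    ∃ (d : ℤ) (G : ℂ → ℂ), (∀ z ≠ 0, ContinuousAt G z) ∧ G 1 = 0 ∧
      ∀ z ≠ 0, φ z = angularPow d z * Complex.exp (G z) := by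
  obtain ⟨L, d, L_zero, exp_L, L_add⟩ := exists_continuous_log_comp_exp hφ h_ne h_one
  let E : ℂ → ℂ := fun w => L w - (w.re + d * (w.im * Complex.I))
  have E_periodic : Function.Periodic E (2 * Real.pi * Complex.I) := fun w => by
    have re_add : (w + 2 * Real.pi * Complex.I).re = w.re := by simp
    have im_add : (w + 2 * Real.pi * Complex.I).im = w.im + 2 * Real.pi := by simp
    simp only [E, L_add, re_add, im_add, Complex.ofReal_add, Complex.ofReal_mul,
      Complex.ofReal_ofNat]
    ring
  refine ⟨d, fun z => E (Complex.log z),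
    fun _ hz => continuousAt_comp_log_of_periodic E_periodic (by fun_prop) hz,
    by simp [E, L_zero], fun z hz => ?_⟩
  conv_rhs => rw [← Complex.exp_log hz, angularPow_exp, Complex.exp_log hz]
  rw [← Complex.exp_add, add_sub_cancel, exp_L, Complex.exp_log hz]

theorem exists_coe_eq_twistedPow (f : C(OnePoint ℂ, OnePoint ℂ)) (f_infty : ∀ x, f x = ∞ ↔ x = ∞)
    (f_zero : ∀ x, f x = (0 : ℂ) ↔ x = (0 : ℂ)) (f_one : f (1 : ℂ) = (1 : ℂ)) :
    ∃ (d : ℤ) (G : ℂ → ℂ), (∀ z ≠ 0, ContinuousAt G z) ∧ G 1 = 0 ∧ ⇑f = twistedPow d G := by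
  obtain ⟨φ, hφ⟩ := exists_lift_of_ne_infty
    (f.comp ⟨((↑) : ℂ → OnePoint ℂ), OnePoint.continuous_coe⟩)
    fun z h => OnePoint.coe_ne_infty z ((f_infty z).1 h)
  replace hφ (z : ℂ) : f z = φ z := (hφ z).symm
  have φ_eq_zero (z : ℂ) : φ z = 0 ↔ z = 0 := by simpa [hφ] using f_zero z
  obtain ⟨d, G, hG, G_one, φ_eq⟩ := exists_eq_angularPow_mul_exp φ.continuous
    (fun z => (φ_eq_zero z).not.2) (by simpa [hφ] using f_one)
  refine ⟨d, G, hG, G_one, funext fun x => ?_⟩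
  induction x using OnePoint.rec with
  | infty => exact (f_infty ∞).2 rfl
  | coe z =>
    rw [hφ, twistedPow_coe, OnePoint.coe_eq_coe]
    rcases eq_or_ne z 0 with rfl | hz
    · simpa using (φ_eq_zero 0).2 rfl
    · exact φ_eq z hz

/-! ### The action of twisted powers on the second homotopy group -/

/-- The exponent of an angular `d`-th root of `e^w`. -/
def divIm (d : ℤ) (w : ℂ) : ℂ :=
  ⟨w.re, w.im / d⟩

theorem continuous_divIm (d : ℤ) : Continuous (divIm d) := by
  have re_im_cont : Continuous fun w : ℂ => (w.re + (w.im / d : ℝ) * Complex.I : ℂ) := by fun_prop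
  exact re_im_cont.congr fun w => (Complex.mk_eq_add_mul_I _ _).symm

theorem re_add_mul_im_divIm {d : ℤ} (hd : d ≠ 0) (w : ℂ) :
    ((divIm d w).re + d * ((divIm d w).im * Complex.I) : ℂ) = w := by
  have hd' : (d : ℂ) ≠ 0 := by exact_mod_cast hd
  rw [← mul_assoc, divIm, Complex.ofReal_div, Complex.ofReal_intCast, mul_div_cancel₀ _ hd']
  exact Complex.re_add_im w

section Action

variable {d : ℤ} {G : ℂ → ℂ}

theorem continuous_twistedPow_of_re_mem_uIcc (hG : Continuous (twistedPow d G)) {G' : ℂ → ℂ}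
    (hG' : ∀ z ≠ 0, ContinuousAt G' z) (h_re : ∀ z, (G' z).re ∈ Set.uIcc 0 (G z).re) (d' : ℤ) :
    Continuous (twistedPow d' G') := by
  have joint := continuous_uncurry_twistedPow hG (T := Unit) (H := fun _ => G')
    (fun _ z hz => ContinuousAt.comp (f := Prod.snd) (hG' z hz) continuousAt_snd)
    (fun _ => h_re) d'
  exact joint.comp (Continuous.prodMk_right ())

/-- The self-map `r e^{iθ} ↦ r e^{idθ}` of the Riemann sphere. -/
def angularPowMap (d : ℤ) : C(OnePoint ℂ, OnePoint ℂ) where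
  toFun := twistedPow d 0
  continuous_toFun := continuous_twistedPow_of_re_mem_uIcc (d := 1) (G := 0)
    (by rw [twistedPow_one_zero]; exact continuous_id) (fun _ _ => continuousAt_const) (by simp) d

theorem coe_angularPowMap (d : ℤ) : ⇑(angularPowMap d) = twistedPow d 0 :=
  rfl

theorem angularPowMap_one : angularPowMap 1 = .id (OnePoint ℂ) :=
  ContinuousMap.ext fun x => congrFun twistedPow_one_zero x

/-- The points `0`, `∞` and `1`, at which the normalized maps are based: twisted powers whose
exponent vanishes at `1` fix them. -/
def markedPoints : Set (OnePoint ℂ) :=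
  {((0 : ℂ) : OnePoint ℂ), ∞, ((1 : ℂ) : OnePoint ℂ)}

theorem twistedPow_of_mem_markedPoints (hG : G 1 = 0) {x : OnePoint ℂ} (hx : x ∈ markedPoints) :
    twistedPow d G x = x := by
  rcases hx with rfl | rfl | rfl
  · simp
  · simp
  · simpa [hG] using angularPow_ofReal d zero_le_one

theorem exists_ray_eq_of_mem_markedPoints {x : OnePoint ℂ} (hx : x ∈ markedPoints) :
    ∃ c, ray c = x := by
  rcases hx with rfl | rfl | rfl
  · exact ⟨0, ray_zero⟩
  · exact ⟨1, ray_one⟩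
  · simpa using exists_ray_eq zero_le_one

variable {f : C(OnePoint ℂ, OnePoint ℂ)}

-- The homotopy scales the exponent `G` down to zero.
theorem homotopicRel_angularPowMap (hf : ⇑f = twistedPow d G) (hG : ∀ z ≠ 0, ContinuousAt G z)
    (G_one : G 1 = 0) : f.HomotopicRel (angularPowMap d) markedPoints := by
  let H : I → ℂ → ℂ := fun t z => ((1 - t : ℝ) : ℂ) * G z
  have H_cont (t : I) (z : ℂ) (hz : z ≠ 0) :
      ContinuousAt (fun v : I × ℂ => H v.1 v.2) (t, z) := by
    have G_cont : ContinuousAt (fun v : I × ℂ => G v.2) (t, z) :=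
      ContinuousAt.comp (f := Prod.snd) (hG z hz) continuousAt_snd
    have scale_cont : Continuous fun v : I × ℂ => ((1 - v.1 : ℝ) : ℂ) := by fun_prop
    exact scale_cont.continuousAt.mul G_cont
  have H_re (t : I) (z : ℂ) : (H t z).re ∈ Set.uIcc 0 (G z).re := by
    rw [Complex.re_ofReal_mul, ← segment_eq_uIcc]
    exact ⟨t, 1 - t, t.2.1, sub_nonneg.2 t.2.2, by ring, by simp⟩
  exact ⟨{
    toFun v := twistedPow d (H v.1) v.2
    continuous_toFun := continuous_uncurry_twistedPow (hf ▸ f.continuous) H_cont H_re d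
    map_zero_left x := by simp [H, hf]
    map_one_left x := by
      have H_one : H 1 = 0 := funext fun z => by simp [H]
      simp only [H_one, coe_angularPowMap]
    prop' t x hx := by
      change twistedPow d (H t) x = f x
      rw [hf, twistedPow_of_mem_markedPoints G_one hx,
        twistedPow_of_mem_markedPoints (by simp [H, G_one]) hx] }⟩

theorem homotopyGroupMap_eq_angularPowMap (hf : ⇑f = twistedPow d G)
    (hG : ∀ z ≠ 0, ContinuousAt G z) (G_one : G 1 = 0) {x : OnePoint ℂ} (hx : x ∈ markedPoints)
    (hfx : f x = x) (γ : HomotopyGroup (Fin 2) (OnePoint ℂ) x) :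
    homotopyGroupMap f hfx γ =
      homotopyGroupMap (angularPowMap d) (twistedPow_of_mem_markedPoints rfl hx) γ := by
  obtain ⟨F⟩ := homotopicRel_angularPowMap hf hG G_one
  exact homotopyGroupMap_eq_of_homotopyRel F hx _ _ γ

theorem homotopyGroupMap_fundamentalClass_rayContraction (hf : ⇑f = twistedPow d G)
    (hG : ∀ z ≠ 0, ContinuousAt G z) (G_one : G 1 = 0) {c : I} (hc : ray c ∈ markedPoints)
    (hfc : f (ray c) = ray c) :
    homotopyGroupMap f hfc (rayContraction c).fundamentalClass =
      (rayContraction c).fundamentalClass ^ d := by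
  rw [homotopyGroupMap_eq_angularPowMap hf hG G_one hc]
  exact (rayContraction c).homotopyGroupMap_fundamentalClass_eq_zpow _ _ d
    (twistedPow_riemannPolar d)

theorem surjective_of_coe_eq_twistedPow_one (hf : ⇑f = twistedPow 1 G)
    (hG : ∀ z ≠ 0, ContinuousAt G z) (G_one : G 1 = 0) {x : OnePoint ℂ} (hx : x ∈ markedPoints)
    [Nontrivial (HomotopyGroup (Fin 2) (OnePoint ℂ) x)] : Function.Surjective f := by
  by_contra not_surjective
  obtain ⟨γ, hγ⟩ := exists_ne (1 : HomotopyGroup (Fin 2) (OnePoint ℂ) x)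
  have hfx : f x = x := by rw [hf, twistedPow_of_mem_markedPoints G_one hx]
  apply hγ
  calc γ = homotopyGroupMap (y := x) (.id _) rfl γ := (homotopyGroupMap_id γ).symm
    _ = homotopyGroupMap (angularPowMap 1) (twistedPow_of_mem_markedPoints rfl hx) γ := by
      simp only [angularPowMap_one]
    _ = homotopyGroupMap f hfx γ := (homotopyGroupMap_eq_angularPowMap hf hG G_one hx hfx γ).symm
    _ = 1 := homotopyGroupMap_eq_one_of_not_surjective f hfx not_surjective γ

theorem exists_surjective_angularPowMap_comp_eq (hf : ⇑f = twistedPow d G) (hd : d ≠ 0)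
    (hG : ∀ z ≠ 0, ContinuousAt G z) (G_one : G 1 = 0) {x : OnePoint ℂ} (hx : x ∈ markedPoints)
    [Nontrivial (HomotopyGroup (Fin 2) (OnePoint ℂ) x)] :
    ∃ g : C(OnePoint ℂ, OnePoint ℂ), Function.Surjective g ∧ (angularPowMap d).comp g = f := by
  have root_cont (z : ℂ) (hz : z ≠ 0) : ContinuousAt (fun z => divIm d (G z)) z :=
    (continuous_divIm d).continuousAt.comp (hG z hz)
  let g : C(OnePoint ℂ, OnePoint ℂ) :=
    ⟨twistedPow 1 fun z => divIm d (G z),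
      continuous_twistedPow_of_re_mem_uIcc (d := d) (G := G) (hf ▸ f.continuous) root_cont
        (fun _ => Set.right_mem_uIcc) 1⟩
  have root_one : divIm d (G 1) = 0 := by
    rw [G_one]
    exact Complex.ext rfl (zero_div _)
  refine ⟨g, surjective_of_coe_eq_twistedPow_one rfl root_cont root_one hx,
    ContinuousMap.ext fun y => ?_⟩
  rw [ContinuousMap.comp_apply, hf]
  exact (twistedPow_zero_comp_twistedPow_one y).trans (by simp only [re_add_mul_im_divIm hd])

end Action

/-! ### Counting fibers -/

theorem exists_angularPow_eq {d : ℤ} (hd : d ≠ 0) {q : ℂ} (hq : q ≠ 0) :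
    ∃ w ≠ 0, angularPow d w = q := by
  refine ⟨Complex.exp (divIm d (Complex.log q)), Complex.exp_ne_zero _, ?_⟩
  rw [angularPow_exp, re_add_mul_im_divIm hd, Complex.exp_log hq]

theorem angularPow_of_norm_eq_one (d : ℤ) {ζ : ℂ} (hζ : ‖ζ‖ = 1) : angularPow d ζ = ζ ^ d := by
  simp [angularPow, hζ]

theorem natAbs_le_encard_angularPow_fiber (d : ℤ) {q : ℂ} (hq : q ≠ 0) :
    (d.natAbs : ℕ∞) ≤ (angularPow d ⁻¹' {q}).encard := by
  rcases eq_or_ne d 0 with rfl | hd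
  · simp
  obtain ⟨w, w_ne_zero, hw⟩ := exists_angularPow_eq hd hq
  have : NeZero d.natAbs := ⟨Int.natAbs_ne_zero.2 hd⟩
  let root : rootsOfUnity d.natAbs ℂ → ℂ := fun ζ => w * (ζ : ℂˣ)
  have root_injective : Function.Injective root := fun ζ ζ' h =>
    Subtype.ext (Units.ext (mul_left_cancel₀ w_ne_zero h))
  have root_mem (ζ) : root ζ ∈ angularPow d ⁻¹' {q} := by
    have ζ_pow : (ζ : ℂˣ) ^ d.natAbs = 1 := ζ.2
    rw [Set.mem_preimage, Set.mem_singleton_iff, angularPow_mul, hw,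
      angularPow_of_norm_eq_one d (Complex.norm_eq_one_of_mem_rootsOfUnity ζ.2),
      ← Units.val_zpow_eq_zpow_val, pow_natAbs_eq_one.1 ζ_pow, Units.val_one, mul_one]
  calc (d.natAbs : ℕ∞) = ENat.card (rootsOfUnity d.natAbs ℂ) := by
        rw [ENat.card_eq_coe_natCard, Complex.card_rootsOfUnity]
    _ ≤ (Set.range root).encard := root_injective.encard_range
    _ ≤ (angularPow d ⁻¹' {q}).encard :=
        Set.encard_le_encard (Set.range_subset_iff.2 root_mem)

theorem natAbs_le_encard_angularPowMap_comp_fiber {d : ℤ} {g : C(OnePoint ℂ, OnePoint ℂ)}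
    (hg : Function.Surjective g) {q : ℂ} (hq : q ≠ 0) :
    (d.natAbs : ℕ∞) ≤ ((angularPowMap d).comp g ⁻¹' {(q : OnePoint ℂ)}).encard := by
  have lifts : ((↑) : ℂ → OnePoint ℂ) '' (angularPow d ⁻¹' {q}) ⊆ angularPowMap d ⁻¹' {↑q} := by
    rintro _ ⟨z, rfl, rfl⟩
    simp [coe_angularPowMap]
  calc (d.natAbs : ℕ∞) ≤ (angularPow d ⁻¹' {q}).encard := natAbs_le_encard_angularPow_fiber d hq
    _ = (((↑) : ℂ → OnePoint ℂ) '' (angularPow d ⁻¹' {q})).encard :=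
        (OnePoint.coe_injective.encard_image _).symm
    _ ≤ (angularPowMap d ⁻¹' {(q : OnePoint ℂ)}).encard := Set.encard_le_encard lifts
    _ = (g '' (g ⁻¹' (angularPowMap d ⁻¹' {(q : OnePoint ℂ)}))).encard := by
        rw [Set.image_preimage_eq _ hg]
    _ ≤ (g ⁻¹' (angularPowMap d ⁻¹' {(q : OnePoint ℂ)})).encard := Set.encard_image_le _ _

theorem natAbs_toAdd_eq {A : Type*} [Group A] (e e' : A ≃* Multiplicative ℤ) (c : A) :
    (e c).toAdd.natAbs = (e' c).toAdd.natAbs := by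
  let change : ℤ ≃+ ℤ := MulEquiv.toAdditive (e.symm.trans e')
  have change_apply : change (e c).toAdd = (e' c).toAdd :=
    congrArg (fun a => (e' a).toAdd) (e.symm_apply_apply c)
  rw [← change_apply]
  rcases Int.addEquiv_eq_refl_or_neg change with h | h <;> simp [h]

theorem natAbs_eq_of_apply_zpow_eq {A : Type*} [Group A] (e e' : A ≃* Multiplicative ℤ) {c : A}
    (hc : c ≠ 1) {d k : ℤ} (h : e' (c ^ d) = e c ^ k) : d.natAbs = k.natAbs := by
  have h_natAbs : d.natAbs * (e' c).toAdd.natAbs = k.natAbs * (e c).toAdd.natAbs := by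
    simpa [Int.natAbs_mul] using congrArg (fun n => n.toAdd.natAbs) h
  have hc' : (e c).toAdd.natAbs ≠ 0 := by simpa using hc
  rw [natAbs_toAdd_eq e' e] at h_natAbs
  exact Nat.eq_of_mul_eq_mul_right (Nat.pos_of_ne_zero hc') h_natAbs

theorem natAbs_le_encard_fiber_of_normalized (f : C(OnePoint ℂ, OnePoint ℂ))
    (f_infty : ∀ x, f x = ∞ ↔ x = ∞) (f_zero : ∀ x, f x = (0 : ℂ) ↔ x = (0 : ℂ))
    (f_one : f (1 : ℂ) = (1 : ℂ)) {x : OnePoint ℂ} (hx : x ∈ markedPoints) (hfx : f x = x)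
    (e e' : HomotopyGroup (Fin 2) (OnePoint ℂ) x ≃* Multiplicative ℤ) {k : ℤ}
    (h_deg : ∀ γ, e' (homotopyGroupMap f hfx γ) = e γ ^ k) {q : ℂ} (hq : q ≠ 0) :
    (k.natAbs : ℕ∞) ≤ (f ⁻¹' {(q : OnePoint ℂ)}).encard := by
  obtain ⟨d, G, hG, G_one, hf⟩ := exists_coe_eq_twistedPow f f_infty f_zero f_one
  obtain ⟨c, rfl⟩ := exists_ray_eq_of_mem_markedPoints hx
  have : Nontrivial (HomotopyGroup (Fin 2) (OnePoint ℂ) (ray c)) := e.toEquiv.nontrivial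
  have h_degree : d.natAbs = k.natAbs := by
    apply natAbs_eq_of_apply_zpow_eq e e' (fundamentalClass_rayContraction_ne_one c)
    rw [← homotopyGroupMap_fundamentalClass_rayContraction hf hG G_one hx hfx, h_deg]
  rcases eq_or_ne d 0 with rfl | hd
  · simp [← h_degree]
  obtain ⟨g, hg, rfl⟩ := exists_surjective_angularPowMap_comp_eq hf hd hG G_one hx
  exact h_degree ▸ natAbs_le_encard_angularPowMap_comp_fiber hg hq

/-! ### Coordinates on the sphere -/

/-- Stereographic projection, as an identification of the Riemann sphere with the 2-sphere. -/
def onePointHomeomorphSphere2 : OnePoint ℂ ≃ₜ Sphere2 :=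
  onePointEquivSphereOfFinrankEq (by simp)

instance infinite_sphere2 : Infinite Sphere2 :=
  .of_injective (fun z : ℂ => onePointHomeomorphSphere2 z)
    (onePointHomeomorphSphere2.injective.comp OnePoint.coe_injective)

theorem exists_homeomorph_onePoint_sphere2 {x y z : Sphere2} (hxy : x ≠ y) (hxz : x ≠ z)
    (hyz : y ≠ z) :
    ∃ m : OnePoint ℂ ≃ₜ Sphere2, m (0 : ℂ) = x ∧ m ∞ = y ∧ m (1 : ℂ) = z := by
  let stereographic := onePointHomeomorphSphere2
  obtain ⟨m, m_zero, m_infty, m_one⟩ := exists_homeomorph_zero_infty_one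
    (stereographic.symm.injective.ne hxy) (stereographic.symm.injective.ne hxz)
    (stereographic.symm.injective.ne hyz)
  exact ⟨m.trans stereographic, by simp [m_zero], by simp [m_infty], by simp [m_one]⟩

theorem exists_ne_ne_mem_triple {α : Type*} [Infinite α] (x y b : α) :
    ∃ z, x ≠ z ∧ y ≠ z ∧ b ∈ ({x, y, z} : Set α) := by
  classical
  by_cases h : b = x ∨ b = y
  · obtain ⟨z, hz⟩ := Infinite.exists_notMem_finset {x, y}
    simp only [Finset.mem_insert, Finset.mem_singleton, not_or] at hz
    exact ⟨z, Ne.symm hz.1, Ne.symm hz.2, h.imp_right Or.inl⟩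
  · obtain ⟨hx, hy⟩ := not_or.1 h
    exact ⟨b, Ne.symm hx, Ne.symm hy, by simp⟩

theorem natAbs_le_encard_fiber_of_coordinates {X Y : Type*} [TopologicalSpace X]
    [TopologicalSpace Y] (ρ : C(X, Y)) (α : OnePoint ℂ ≃ₜ X) (β : OnePoint ℂ ≃ₜ Y)
    (h_zero : ∀ x, ρ (α x) = β (0 : ℂ) ↔ x = (0 : ℂ)) (h_infty : ∀ x, ρ (α x) = β ∞ ↔ x = ∞)
    (h_one : ρ (α (1 : ℂ)) = β (1 : ℂ)) {x : OnePoint ℂ} (hx : x ∈ markedPoints)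
    (e : HomotopyGroup (Fin 2) X (α x) ≃* Multiplicative ℤ)
    (e' : HomotopyGroup (Fin 2) Y (ρ (α x)) ≃* Multiplicative ℤ) {k : ℤ}
    (h_deg : ∀ γ, e' (homotopyGroupMap ρ rfl γ) = e γ ^ k) {q : ℂ} (hq : q ≠ 0) :
    (k.natAbs : ℕ∞) ≤ (ρ ⁻¹' {β q}).encard := by
  let f : C(OnePoint ℂ, OnePoint ℂ) := (β.symm : C(Y, OnePoint ℂ)).comp (ρ.comp α)
  have f_eq_iff (y z : OnePoint ℂ) : f y = z ↔ ρ (α y) = β z := β.symm_apply_eq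
  have h_fixed : ρ (α x) = β x := by
    rcases hx with rfl | rfl | rfl
    exacts [(h_zero _).2 rfl, (h_infty _).2 rfl, h_one]
  have hfx : f x = x := (f_eq_iff x x).2 h_fixed
  have comp_eq : (β : C(OnePoint ℂ, Y)).comp f = ρ.comp α :=
    ContinuousMap.ext fun y => β.apply_symm_apply _
  have f_deg (γ) : ((homotopyGroupCongr β h_fixed.symm).trans e') (homotopyGroupMap f hfx γ) =
      ((homotopyGroupCongr α rfl).trans e) γ ^ k := by
    simp only [MulEquiv.trans_apply, homotopyGroupCongr_apply, ← h_deg]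
    rw [← homotopyGroupMap_comp _ _ _ _ (DFunLike.congr_fun comp_eq x)]
    simp only [comp_eq]
    exact congrArg e' (homotopyGroupMap_comp _ _ _ _ rfl γ)
  have fiber_eq : ρ ⁻¹' {β q} = α '' (f ⁻¹' {(q : OnePoint ℂ)}) := by
    ext y
    obtain ⟨x, rfl⟩ := α.surjective y
    simp [f_eq_iff]
  rw [fiber_eq, α.injective.encard_image]
  exact natAbs_le_encard_fiber_of_normalized f (fun y => (f_eq_iff y _).trans (h_infty y))
    (fun y => (f_eq_iff y _).trans (h_zero y)) ((f_eq_iff _ _).2 h_one) hx hfx _ _ f_deg hq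

theorem natAbs_le_encard_fiber {ρ : C(Sphere2, Sphere2)} {k : ℤ} (h_deg : HasDegree ρ k)
    {p₁ p₂ : Sphere2} (hne : p₁ ≠ p₂) (h₁ : ∃ a, ρ ⁻¹' {p₁} = {a}) (h₂ : ∃ a, ρ ⁻¹' {p₂} = {a})
    {q : Sphere2} (hq₁ : q ≠ p₁) (hq₂ : q ≠ p₂) : (k.natAbs : ℕ∞) ≤ (ρ ⁻¹' {q}).encard := by
  obtain ⟨a₁, ha₁⟩ := h₁
  obtain ⟨a₂, ha₂⟩ := h₂
  have fiber₁ (x) : ρ x = p₁ ↔ x = a₁ := Set.ext_iff.1 ha₁ x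
  have fiber₂ (x) : ρ x = p₂ ↔ x = a₂ := Set.ext_iff.1 ha₂ x
  obtain ⟨b, e₁, e₂, he⟩ := h_deg
  obtain ⟨a₃, ha₁₃, ha₂₃, hb⟩ := exists_ne_ne_mem_triple a₁ a₂ b
  obtain ⟨α, rfl, rfl, rfl⟩ := exists_homeomorph_onePoint_sphere2
    (fun h => hne (((fiber₁ a₁).2 rfl).symm.trans ((fiber₂ a₁).2 h))) ha₁₃ ha₂₃
  obtain ⟨β, rfl, rfl, h_one⟩ := exists_homeomorph_onePoint_sphere2 (z := ρ (α (1 : ℂ))) hne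
    (fun h => ha₁₃ ((fiber₁ _).1 h.symm).symm) (fun h => ha₂₃ ((fiber₂ _).1 h.symm).symm)
  obtain ⟨x, hx, rfl⟩ : ∃ x ∈ markedPoints, α x = b := by
    rcases hb with rfl | rfl | rfl
    exacts [⟨_, Or.inl rfl, rfl⟩, ⟨_, Or.inr (Or.inl rfl), rfl⟩, ⟨_, Or.inr (Or.inr rfl), rfl⟩]
  obtain ⟨y, rfl⟩ := β.surjective q
  obtain ⟨z, rfl⟩ := OnePoint.ne_infty_iff_exists.1 (ne_of_apply_ne β hq₂)
  have hz : z ≠ 0 := fun h => hq₁ (by rw [h])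
  exact natAbs_le_encard_fiber_of_coordinates ρ α β
    (fun x => (fiber₁ _).trans α.injective.eq_iff) (fun x => (fiber₂ _).trans α.injective.eq_iff)
    h_one.symm hx e₁ e₂ he hz

/-- Let `ρ : S² → S²` be a continuous map of degree `k ≥ 2`.  If there are two
distinct points `p₁ ≠ p₂` whose fibers are singletons, then every other point has a
fiber with at least `k` elements; in particular the set of points with singleton
fiber has at most two elements. -/
theorem singleton_fibers (ρ : C(Sphere2, Sphere2)) (k : ℕ)
    (hk : 2 ≤ k) (hdeg : HasDegree ρ (k : ℤ))
    (p₁ p₂ : Sphere2) (hne : p₁ ≠ p₂)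
    (h₁ : ∃ a, ρ ⁻¹' {p₁} = {a}) (h₂ : ∃ a, ρ ⁻¹' {p₂} = {a}) :
    (∀ q : Sphere2, q ≠ p₁ → q ≠ p₂ → (k : ℕ∞) ≤ (ρ ⁻¹' {q}).encard) ∧
      {p : Sphere2 | ∃ a, ρ ⁻¹' {p} = {a}}.encard ≤ 2 := by
  have fiber_large (q) (hq₁ : q ≠ p₁) (hq₂ : q ≠ p₂) : (k : ℕ∞) ≤ (ρ ⁻¹' {q}).encard :=
    natAbs_le_encard_fiber hdeg hne h₁ h₂ hq₁ hq₂
  have singleton_subset : {p : Sphere2 | ∃ a, ρ ⁻¹' {p} = {a}} ⊆ {p₁, p₂} := by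
    rintro p ⟨a, ha⟩
    by_contra hp
    obtain ⟨hp₁, hp₂⟩ := not_or.1 hp
    have k_le_one : (k : ℕ∞) ≤ 1 := by simpa [ha] using fiber_large p hp₁ hp₂
    exact absurd hk (not_le.2 (Nat.lt_succ_of_le (by exact_mod_cast k_le_one)))
  exact ⟨fiber_large, (Set.encard_le_encard singleton_subset).trans (Set.encard_pair hne).le⟩
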